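/- For every Cayley tree T labelled with [n]_0, the degree of the root of T equals the number of 1's in its preference sequence, and the children sequence of T equals the multiplicity sequence of its preference sequence: deg_∘(T) = ones(π_T) and chseq(T) = mult(π_T). -/

import Mathlib

/-!
The preference sequence is `σ ∘ f`, where `f` is the parent function and `σ v = ω⁻¹ v + 1`. Once
`σ` is known to map `{0,…,n}` bijectively onto `{1,…,n+1}`, the positions at which it takes the
value `σ v` are the children of `v`; hence `σ` matches the vertices with `j` children with the
values of multiplicity `j`, and `σ 0 = 1` gives the root.

Bijectivity of `σ` means that the priority-first search visits every vertex exactly once. As long as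
some vertex is unvisited, the path from it to the root has an unvisited vertex with a visited
parent, so the search always finds a new vertex, and after `n` steps its `n + 1` distinct entries
exhaust `{0,…,n}`.
-/

open scoped Classical

namespace WearyParking

/-- `f` is the parent function of a Cayley tree on `{0,…,n}` rooted at `0`:
`f 0 = 0`, `f` is pinned to `0` outside `{1,…,n}`, `f` maps `{1,…,n}` into `{0,…,n}`,
and every vertex reaches the root under iteration. -/
def IsCayleyTree (n : ℕ) (f : ℕ → ℕ) : Prop :=
  f 0 = 0 ∧ (∀ i, n < i → f i = 0) ∧
  (∀ i, 1 ≤ i → i ≤ n → f i ≤ n) ∧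
  (∀ i, 1 ≤ i → i ≤ n → ∃ k, f^[k] i = 0)

/-- A non-root vertex `i` is a record of the tree if it is greater than
all of its ancestors. -/
def IsRecord (n : ℕ) (f : ℕ → ℕ) (i : ℕ) : Prop :=
  1 ≤ i ∧ i ≤ n ∧ ∀ k, 1 ≤ k → f^[k] i < i

/-- The smallest record larger than `i`. -/
noncomputable def nextRecord (n : ℕ) (f : ℕ → ℕ) (i : ℕ) : ℕ :=
  sInf {j | IsRecord n f j ∧ i < j}

/-- The record (blob) code of the tree, a function on `{1,…,n-1}`:
at a non-record position it records the parent, and at a record position it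
records the parent of the next record. -/
noncomputable def blob (n : ℕ) (f : ℕ → ℕ) (i : ℕ) : ℕ :=
  if IsRecord n f i then f (nextRecord n f i) else f i

/-- Number of children of vertex `v` in the tree. -/
def numChildren (n : ℕ) (f : ℕ → ℕ) (v : ℕ) : ℕ :=
  ((Finset.Icc 1 n).filter fun i => f i = v).card

/-- The list of the first `i+1` vertices visited by the priority-first search:
start at the root `0`; at each step visit the smallest unvisited vertex whose
parent has been visited. -/
noncomputable def wearyList (n : ℕ) (f : ℕ → ℕ) : ℕ → List ℕ
  | 0 => [0]
  | (i + 1) =>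
      wearyList n f i ++
        [sInf {v | 1 ≤ v ∧ v ≤ n ∧ v ∉ wearyList n f i ∧ f v ∈ wearyList n f i}]

/-- The weary permutation of the tree: `weary n f i` is the `i`-th vertex visited
by the priority-first search (with `weary n f 0 = 0`). -/
noncomputable def weary (n : ℕ) (f : ℕ → ℕ) (i : ℕ) : ℕ :=
  (wearyList n f n).getD i 0

/-- The inverse of the weary permutation. -/
noncomputable def wearyInv (n : ℕ) (f : ℕ → ℕ) (v : ℕ) : ℕ :=
  sInf {i | weary n f i = v}

/-- The preference sequence `π_T` of the tree: `π_T i = ω_T⁻¹ (f_T i) + 1`. -/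
noncomputable def pref (n : ℕ) (f : ℕ → ℕ) (i : ℕ) : ℕ :=
  wearyInv n f (f i) + 1

/-- Parent function of the priority tree `pt(T)`: `ω_T⁻¹ ∘ f_T ∘ ω_T`. -/
noncomputable def prioParent (n : ℕ) (f : ℕ → ℕ) (i : ℕ) : ℕ :=
  wearyInv n f (f (weary n f i))

/-- The list of spots occupied by cars `1,…,c` in the classical parking process:
car `c` parks at the first spot `≥ π c` not occupied by an earlier car. -/
noncomputable def spotList (π : ℕ → ℕ) : ℕ → List ℕ
  | 0 => []
  | (c + 1) => spotList π c ++ [sInf {s | π (c + 1) ≤ s ∧ s ∉ spotList π c}]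

/-- The spot where car `c` ends up in the classical parking process. -/
noncomputable def spot (π : ℕ → ℕ) (c : ℕ) : ℕ :=
  (spotList π c).getD (c - 1) 0

/-- `π` is a parking function of length `n`: preferences lie in `{1,…,n}`
(pinned to `1` outside `{1,…,n}`) and every car parks within the `n` spots. -/
def IsParkingFun (n : ℕ) (π : ℕ → ℕ) : Prop :=
  (∀ c, 1 ≤ c → c ≤ n → 1 ≤ π c ∧ π c ≤ n) ∧
  (∀ c, c = 0 ∨ n < c → π c = 1) ∧
  (∀ c, 1 ≤ c → c ≤ n → spot π c ≤ n)

/-- The bird's-eye permutation `ω_π`: the car parked at spot `i` (and `0` at `0`). -/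
noncomputable def birdsEye (n : ℕ) (π : ℕ → ℕ) (i : ℕ) : ℕ :=
  if i = 0 then 0 else sInf {c | 1 ≤ c ∧ c ≤ n ∧ spot π c = i}

/-- The inverse of the bird's-eye permutation. -/
noncomputable def birdsEyeInv (n : ℕ) (π : ℕ → ℕ) (c : ℕ) : ℕ :=
  sInf {i | birdsEye n π i = c}

/-- Parent function of the parking tree `PT(π)`: `f_π i = ω_π (π i - 1)`. -/
noncomputable def ptParent (n : ℕ) (π : ℕ → ℕ) (i : ℕ) : ℕ :=
  if 1 ≤ i ∧ i ≤ n then birdsEye n π (π i - 1) else 0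

/-- `v` is a record of the parking function `π`, i.e. a left-to-right maximum of
the word `ω_π(1) ω_π(2) ⋯ ω_π(n)`. -/
def IsPfRecord (n : ℕ) (π : ℕ → ℕ) (v : ℕ) : Prop :=
  ∃ i, 1 ≤ i ∧ i ≤ n ∧ birdsEye n π i = v ∧ ∀ j, 1 ≤ j → j < i → birdsEye n π j < v

/-- The waiting time of the tree: `wait T = Σ_{i=1}^n (i - f_{pt(T)}(i))`. -/
noncomputable def wait (n : ℕ) (f : ℕ → ℕ) : ℕ :=
  ∑ i ∈ Finset.Icc 1 n, (i - prioParent n f i)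

/-- The number of priority small ascents of the tree. -/
noncomputable def psa (n : ℕ) (f : ℕ → ℕ) : ℕ :=
  ((Finset.Icc 1 n).filter fun i => prioParent n f i = i - 1).card

/-- The number of children of the root. -/
def degRoot (n : ℕ) (f : ℕ → ℕ) : ℕ := numChildren n f 0

/-- The children sequence: `chseq n f j` is the number of vertices with exactly
`j` children. -/
def chseq (n : ℕ) (f : ℕ → ℕ) (j : ℕ) : ℕ :=
  ((Finset.Icc 0 n).filter fun v => numChildren n f v = j).card

/-- The number of probes of the parking function: `n` plus the total displacement. -/
noncomputable def probes (n : ℕ) (π : ℕ → ℕ) : ℕ :=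
  n + ∑ c ∈ Finset.Icc 1 n, (spot π c - π c)

/-- The number of lucky cars of `π`: cars parking at their preferred spot. -/
noncomputable def lucky (n : ℕ) (π : ℕ → ℕ) : ℕ :=
  ((Finset.Icc 1 n).filter fun c => spot π c = π c).card

/-- The number of `1`s in `π`. -/
def ones (n : ℕ) (π : ℕ → ℕ) : ℕ :=
  ((Finset.Icc 1 n).filter fun c => π c = 1).card

/-- The multiplicity of the value `v` in the parking function `π`. -/
def multIn (n : ℕ) (π : ℕ → ℕ) (v : ℕ) : ℕ :=
  ((Finset.Icc 1 n).filter fun c => π c = v).card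

/-- The multiplicity sequence: `multSeq n π j` is the number of values in
`{1,…,n+1}` appearing exactly `j` times in `π`. -/
def multSeq (n : ℕ) (π : ℕ → ℕ) (j : ℕ) : ℕ :=
  ((Finset.Icc 1 (n + 1)).filter fun v => multIn n π v = j).card

/-- The tree is a path graph with endpoints `0` and `n`: every vertex has at most
one child and `n` is the (unique) leaf. -/
def IsPathTree (n : ℕ) (f : ℕ → ℕ) : Prop :=
  (∀ v, v ≤ n → numChildren n f v ≤ 1) ∧ numChildren n f n = 0

/-- `g` is the parent map of a rooted forest on `{1,…,n}` rooted at `{1,…,k}`: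
the vertices `1,…,k` are roots (fixed points), every other vertex of `{1,…,n}` has a
parent in `{1,…,n}`, every vertex reaches one of the roots under iteration, and `g`
is pinned to `0` outside `{1,…,n}`. -/
def IsForestRootedAt (n k : ℕ) (g : ℕ → ℕ) : Prop :=
  (∀ i, 1 ≤ i → i ≤ k → g i = i) ∧
  (∀ i, k < i → i ≤ n → 1 ≤ g i ∧ g i ≤ n) ∧
  (∀ i, 1 ≤ i → i ≤ n → ∃ m, 1 ≤ g^[m] i ∧ g^[m] i ≤ k) ∧
  (∀ i, i = 0 ∨ n < i → g i = 0)

section General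

open Finset Set

variable {α β ι : Type*}

theorem card_filter_comp_of_bijOn {s : Finset α} {t : Finset β} {g : α → β} (hg : BijOn g s t)
    (p : β → Prop) [DecidablePred p] : #{a ∈ s | p (g a)} = #{b ∈ t | p b} := by
  classical
  obtain rfl : s.image g = t := mod_cast hg.image_eq
  rw [filter_image, card_image_of_injOn (hg.injOn.mono (coe_subset.mpr (filter_subset _ s)))]

theorem card_filter_comp_eq_of_injOn [DecidableEq α] [DecidableEq β] {s : Finset ι} {t : Set α}
    {f : ι → α} {g : α → β} (hf : MapsTo f s t) (hg : InjOn g t) {a : α} (ha : a ∈ t) :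
    #{i ∈ s | g (f i) = g a} = #{i ∈ s | f i = a} :=
  congrArg card <| filter_congr fun _ hi => hg.eq_iff (hf hi) ha

theorem bijOn_getD_of_nodup {l : List α} (hl : l.Nodup) (d : α) :
    BijOn (fun i => l.getD i d) (Set.Iio l.length) {a | a ∈ l} := by
  refine ⟨fun i hi => ?_, fun i hi j hj hij => ?_, fun a ha => ?_⟩
  · simp only [l.getD_eq_getElem d hi]
    exact l.getElem_mem hi
  · simp only [l.getD_eq_getElem d hi, l.getD_eq_getElem d hj] at hij
    exact hl.getElem_inj_iff.mp hij
  · obtain ⟨i, hi, rfl⟩ := List.mem_iff_getElem.mp ha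
    exact ⟨i, hi, l.getD_eq_getElem d hi⟩

theorem leftInvOn_sInf_fiber {w : ℕ → α} {s : Set ℕ} (hs : IsLowerSet s) (hw : InjOn w s) :
    LeftInvOn (fun a => sInf {i | w i = a}) w s := fun i hi =>
  have hmem : w (sInf {j | w j = w i}) = w i := Nat.sInf_mem (s := {j | w j = w i}) ⟨i, rfl⟩
  have hle : sInf {j | w j = w i} ≤ i := Nat.sInf_le rfl
  hw (hs hle hi) hi hmem

theorem exists_iterate_notMem_and_apply_mem {f : α → α} {s : Set α} {a : α} (ha : a ∉ s)
    (hs : ∃ k, f^[k] a ∈ s) : ∃ k, f^[k] a ∉ s ∧ f (f^[k] a) ∈ s := by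
  simpa only [Function.iterate_succ_apply'] using
    Nat.exists_not_and_succ_of_not_zero_of_exists (p := fun k => f^[k] a ∈ s) ha hs

end General

/-- The candidates for the next visit of the priority-first search once the vertices in `l` have
been visited: the unvisited non-root vertices with a visited parent. -/
def frontier (n : ℕ) (f : ℕ → ℕ) (l : List ℕ) : Set ℕ :=
  {v | 1 ≤ v ∧ v ≤ n ∧ v ∉ l ∧ f v ∈ l}

/-- The map `σ`: `childPref n f v` is the common preference `ω_T⁻¹ v + 1` of the children of `v`, so
that the preference sequence is `σ ∘ f`. -/
noncomputable def childPref (n : ℕ) (f : ℕ → ℕ) (v : ℕ) : ℕ :=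
  wearyInv n f v + 1

section Search

variable (n : ℕ) (f : ℕ → ℕ) (i : ℕ)

theorem wearyList_succ :
    wearyList n f (i + 1) = wearyList n f i ++ [sInf (frontier n f (wearyList n f i))] := rfl

theorem length_wearyList : (wearyList n f i).length = i + 1 := by
  induction i with
  | zero => rfl
  | succ i ih => rw [wearyList_succ, List.length_append, ih, List.length_singleton]

theorem head?_wearyList : (wearyList n f i).head? = some 0 := by
  induction i with
  | zero => rfl
  | succ i ih => rw [wearyList_succ, List.head?_append, ih, Option.some_or]

theorem weary_zero : weary n f 0 = 0 := by
  rw [weary, List.getD_eq_getElem?_getD, ← List.head?_eq_getElem?, head?_wearyList,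
    Option.getD_some]

theorem childPref_zero : childPref n f 0 = 1 :=
  congrArg (· + 1) <| Nat.sInf_eq_zero.mpr (Or.inl (weary_zero n f))

end Search

namespace IsCayleyTree

open Set

variable {n : ℕ} {f : ℕ → ℕ}

theorem mapsTo_Iic (hf : IsCayleyTree n f) : MapsTo f (Iic n) (Iic n) := by
  obtain ⟨hroot, -, hle, -⟩ := hf
  intro v hv
  rcases v.eq_zero_or_pos with rfl | hpos
  · exact hroot.trans_le n.zero_le
  · exact hle v hpos hv

theorem exists_iterate_eq_zero (hf : IsCayleyTree n f) {v : ℕ} (hv : v ≤ n) :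
    ∃ k, f^[k] v = 0 := by
  rcases v.eq_zero_or_pos with rfl | hpos
  · exact ⟨0, rfl⟩
  · exact hf.2.2.2 v hpos hv

theorem frontier_nonempty (hf : IsCayleyTree n f) {l : List ℕ} (hroot : 0 ∈ l) {v : ℕ}
    (hvn : v ≤ n) (hv : v ∉ l) : (frontier n f l).Nonempty := by
  obtain ⟨k, hk⟩ := hf.exists_iterate_eq_zero hvn
  obtain ⟨m, hnew, hparent⟩ := exists_iterate_notMem_and_apply_mem (f := f) (s := {u | u ∈ l}) hv
    ⟨k, hk ▸ hroot⟩
  have hpos : 1 ≤ f^[m] v := Nat.one_le_iff_ne_zero.mpr fun h => hnew (h ▸ hroot)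
  exact ⟨f^[m] v, hpos, hf.mapsTo_Iic.iterate m hvn, hnew, hparent⟩

theorem sInf_frontier_mem (hf : IsCayleyTree n f) {i : ℕ} (hi : i < n) :
    sInf (frontier n f (wearyList n f i)) ∈ frontier n f (wearyList n f i) := by
  have hcard : (wearyList n f i).toFinset.card < (Finset.Iic n).card :=
    calc (wearyList n f i).toFinset.card ≤ i + 1 :=
          (List.toFinset_card_le _).trans_eq (length_wearyList n f i)
      _ < n + 1 := Nat.succ_lt_succ hi
      _ = (Finset.Iic n).card := (Nat.card_Iic n).symm
  obtain ⟨v, hvn, hv⟩ := Finset.exists_mem_notMem_of_card_lt_card hcard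
  exact Nat.sInf_mem <| hf.frontier_nonempty (List.mem_of_head? (head?_wearyList n f i))
    (Finset.mem_Iic.mp hvn) (mt List.mem_toFinset.mpr hv)

theorem nodup_wearyList (hf : IsCayleyTree n f) {i : ℕ} (hi : i ≤ n) :
    (wearyList n f i).Nodup := by
  induction i with
  | zero => exact List.nodup_singleton 0
  | succ i ih =>
    obtain ⟨-, -, hnew, -⟩ := hf.sInf_frontier_mem hi
    rw [wearyList_succ, ← List.concat_eq_append]
    exact (ih (Nat.le_of_succ_le hi)).concat hnew

theorem le_of_mem_wearyList (hf : IsCayleyTree n f) {i v : ℕ} (hi : i ≤ n)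
    (hv : v ∈ wearyList n f i) : v ≤ n := by
  induction i with
  | zero => exact (List.mem_singleton.mp hv).trans_le n.zero_le
  | succ i ih =>
    rcases List.mem_append.mp (wearyList_succ n f i ▸ hv) with hold | hlast
    · exact ih (Nat.le_of_succ_le hi) hold
    · exact List.mem_singleton.mp hlast ▸ (hf.sInf_frontier_mem hi).2.1

theorem mem_wearyList_iff (hf : IsCayleyTree n f) {v : ℕ} : v ∈ wearyList n f n ↔ v ≤ n := by
  have hsub : (wearyList n f n).toFinset ⊆ Finset.Iic n := fun u hu =>
    Finset.mem_Iic.mpr <| hf.le_of_mem_wearyList le_rfl (List.mem_toFinset.mp hu)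
  have hcard : (wearyList n f n).toFinset.card = (Finset.Iic n).card := by
    rw [List.toFinset_card_of_nodup (hf.nodup_wearyList le_rfl), length_wearyList, Nat.card_Iic]
  rw [← List.mem_toFinset, Finset.eq_of_subset_of_card_le hsub hcard.ge, Finset.mem_Iic]

theorem bijOn_weary (hf : IsCayleyTree n f) : BijOn (weary n f) (Iic n) (Iic n) := by
  have hdom : Iio (wearyList n f n).length = Iic n := by
    rw [length_wearyList]
    exact Order.Iio_succ n
  have hcod : {v | v ∈ wearyList n f n} = Iic n := Set.ext fun _ => hf.mem_wearyList_iff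
  have hbij := bijOn_getD_of_nodup (hf.nodup_wearyList le_rfl) 0
  rwa [hdom, hcod] at hbij

theorem bijOn_wearyInv (hf : IsCayleyTree n f) : BijOn (wearyInv n f) (Iic n) (Iic n) :=
  have hleft : LeftInvOn (wearyInv n f) (weary n f) (Iic n) :=
    leftInvOn_sInf_fiber (isLowerSet_Iic n) hf.bijOn_weary.injOn
  have hright : RightInvOn (wearyInv n f) (weary n f) (Iic n) := by
    simpa only [hf.bijOn_weary.image_eq] using hleft.rightInvOn_image
  hf.bijOn_weary.symm ⟨hright, hleft⟩

theorem bijOn_childPref (hf : IsCayleyTree n f) :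
    BijOn (childPref n f) (Finset.Icc 0 n) (Finset.Icc 1 (n + 1)) := by
  rw [Finset.coe_Icc, Finset.coe_Icc]
  have hinv : BijOn (wearyInv n f) (Icc 0 n) (Icc 0 n) := by
    simpa only [← Icc_bot, bot_eq_zero] using hf.bijOn_wearyInv
  have hshift : BijOn (· + 1) (Icc 0 n) (Icc 1 (n + 1)) := by
    simpa only [image_add_const_Icc, zero_add] using
      (add_left_injective 1).injOn.bijOn_image (s := Icc 0 n)
  exact hshift.comp hinv

theorem multIn_pref_childPref (hf : IsCayleyTree n f) {v : ℕ} (hv : v ≤ n) :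
    multIn n (pref n f) (childPref n f v) = numChildren n f v := by
  have hparent : MapsTo f (Finset.Icc 1 n) (Finset.Icc 0 n) := fun i hi =>
    Finset.mem_Icc.mpr ⟨(f i).zero_le, hf.mapsTo_Iic (Finset.mem_Icc.mp hi).2⟩
  exact card_filter_comp_eq_of_injOn hparent hf.bijOn_childPref.injOn
    (Finset.mem_Icc.mpr ⟨v.zero_le, hv⟩)

end IsCayleyTree

/-- For every Cayley tree `T`: `deg∘(T) = ones(π_T)` and
`chseq(T) = mult(π_T)` (entrywise, for `j = 0,…,n`). -/
theorem stmt16 (n : ℕ) (f : ℕ → ℕ) (hf : IsCayleyTree n f) :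
    degRoot n f = ones n (pref n f) ∧
      ∀ j, j ≤ n → chseq n f j = multSeq n (pref n f) j := by
  constructor
  · calc degRoot n f = multIn n (pref n f) (childPref n f 0) :=
          (hf.multIn_pref_childPref n.zero_le).symm
      _ = ones n (pref n f) := by rw [childPref_zero]; rfl
  · intro j _
    rw [chseq, multSeq, ← card_filter_comp_of_bijOn hf.bijOn_childPref]
    refine congrArg Finset.card (Finset.filter_congr fun v hv => ?_)
    rw [hf.multIn_pref_childPref (Finset.mem_Icc.mp hv).2]

end WearyParking
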